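/- arXiv:2402.07882 — 2 statements merged into one kernel-verified Lean document; each statement's English description precedes it below -/
import Mathlib

section
/- Let V be a finite-dimensional F-vector space, Q a nondegenerate quadratic form on V with Witt index w, and G a generator of Q (a totally singular subspace of dimension w). Let X be a subspace of V with G ⊆ X, dim X = w + 1, and X not contained in G^⊥. Then X contains a generator of Q distinct from G. -/
open Module Submodule

section Defs

variable {F : Type*} [Field F] {V : Type*} [AddCommGroup V] [Module F V]

/-- A subspace is totally singular if the quadratic form vanishes on it. -/
def IsTotallySingular (Q : QuadraticForm F V) (W : Submodule F V) : Prop :=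
  ∀ x ∈ W, Q x = 0

/-- The Witt index: maximal dimension of a totally singular subspace. -/
noncomputable def wittIndex (Q : QuadraticForm F V) : ℕ :=
  sSup {n : ℕ | ∃ W : Submodule F V, IsTotallySingular Q W ∧ Module.finrank F ↥W = n}

/-- Nondegeneracy: the only singular vector orthogonal to everything is `0`. -/
def QuadNondeg (Q : QuadraticForm F V) : Prop :=
  ∀ v : V, Q v = 0 → (∀ x : V, QuadraticMap.polar Q v x = 0) → v = 0

/-- A generator: totally singular subspace of dimension the Witt index. -/
def IsGenerator (Q : QuadraticForm F V) (G : Submodule F V) : Prop :=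
  IsTotallySingular Q G ∧ Module.finrank F ↥G = wittIndex Q

/-- A spread of `Q`. -/
def IsSpread (Q : QuadraticForm F V) (S : Set (Submodule F V)) : Prop :=
  (∀ G ∈ S, IsGenerator Q G) ∧
  (∀ G ∈ S, ∀ G' ∈ S, G ≠ G' → G ⊓ G' = ⊥) ∧
  (∀ v : V, Q v = 0 → ∃ G ∈ S, v ∈ G)

/-- The perp of a vector with respect to the polar form of `Q`. -/
def vecPerp (Q : QuadraticForm F V) (u : V) : Submodule F V :=
  LinearMap.ker (QuadraticMap.polarBilin Q u)

/-- The perp of a subspace with respect to the polar form of `Q`. -/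
def subPerp (Q : QuadraticForm F V) (G : Submodule F V) : Submodule F V :=
  ⨅ g ∈ G, vecPerp Q g

/-- Hyperbolic (e = 0), parabolic (e = 1) or elliptic (e = 2) affine vector space
partition for `(U, H, Q, Pgen)`. -/
def IsAvsp [Fintype F] (e r : ℕ) {U : Type*} [AddCommGroup U] [Module F U]
    (H : Submodule F U) (Q : QuadraticForm F ↥H) (Pgen : Submodule F ↥H)
    (P : Set (Submodule F U)) : Prop :=
  P.ncard = Fintype.card F ^ ((r + e + 1) / 2) ∧
  (∀ S ∈ P, Module.finrank F ↥S = (r + 3 - e) / 2 ∧ ¬ S ≤ H) ∧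
  (∀ L : Submodule F U, Module.finrank F ↥L = 1 → ¬ L ≤ H → ∃! S, S ∈ P ∧ L ≤ S) ∧
  (∀ S ∈ P, IsGenerator Q (S.comap H.subtype) ∧ S.comap H.subtype ⊓ Pgen = ⊥) ∧
  (∀ S ∈ P, ∀ T ∈ P, S ≠ T → S.comap H.subtype ≠ T.comap H.subtype) ∧
  (∀ S ∈ P, ∀ T ∈ P, S ≠ T → Module.finrank F ↥(S ⊓ T) ≤ 1) ∧
  (∀ S ∈ P, ∀ T ∈ P, S ≠ T →
    Module.finrank F ↥(S.comap H.subtype ⊓ T.comap H.subtype) = 1 →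
      QuadNondeg (Q.comp ((S ⊔ T).comap H.subtype).subtype) ∧
      Module.finrank F ↥((S ⊔ T).comap H.subtype) =
        2 * wittIndex (Q.comp ((S ⊔ T).comap H.subtype).subtype))

end Defs

/-!
Since `X` is not contained in `G^⊥`, it contains a nonsingular vector `x` outside `G^⊥`: if some
`x ∈ X \ G^⊥` is singular, then `g + x` is nonsingular for any `g ∈ G` not orthogonal to `x`. The
orthogonal reflection in `x` is an isometry, hence carries `G` to a generator. It moves every vector
along `x`, so the image stays inside `X`; and it moves some vector of `G` by a nonzero multiple of
`x`, which is not in `G ⊆ G^⊥`, so the image is not `G`.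
-/

section OrthogonalReflection

variable {R M : Type*} [CommRing R] [AddCommGroup M] [Module R M]

theorem invOf_smul_polarBilin_self (Q : QuadraticForm R M) (x : M) [Invertible (Q x)] :
    (⅟(Q x) • QuadraticMap.polarBilin Q x) x = 2 := by
  simp [mul_left_comm _ (2 : R)]

/-- The orthogonal reflection `y ↦ y - (Q x)⁻¹ B(x, y) x` in a vector `x` with `Q x` invertible, as
an isometry of `Q`. Dividing by `Q x` instead of by `B(x, x) = 2 Q x` makes it available in
characteristic two as well. -/
def orthogonalReflection (Q : QuadraticForm R M) (x : M) [Invertible (Q x)] :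
    Q.IsometryEquiv Q where
  toLinearEquiv := Module.reflection (x := x) (f := ⅟(Q x) • QuadraticMap.polarBilin Q x)
    (invOf_smul_polarBilin_self Q x)
  map_app' y := by
    change Q (Module.reflection _ y) = Q y
    rw [Module.reflection_apply, sub_eq_add_neg, ← neg_smul, QuadraticMap.map_add Q,
      QuadraticMap.map_smul, QuadraticMap.polar_smul_right, QuadraticMap.polar_comm Q y x]
    simp only [LinearMap.smul_apply, QuadraticMap.polarBilin_apply_apply, smul_eq_mul]
    linear_combination (⅟(Q x) * QuadraticMap.polar Q x y ^ 2) * invOf_mul_self (Q x)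

theorem orthogonalReflection_apply (Q : QuadraticForm R M) (x : M) [Invertible (Q x)] (y : M) :
    orthogonalReflection Q x y = y - (⅟(Q x) * QuadraticMap.polar Q x y) • x :=
  Module.reflection_apply y (invOf_smul_polarBilin_self Q x)

theorem map_orthogonalReflection_le {Q : QuadraticForm R M} {x : M} [Invertible (Q x)]
    {G X : Submodule R M} (hGX : G ≤ X) (hx : x ∈ X) :
    G.map (orthogonalReflection Q x : M →ₗ[R] M) ≤ X := by
  rintro _ ⟨g, hg, rfl⟩
  exact (orthogonalReflection_apply Q x g).symm ▸ X.sub_mem (hGX hg) (X.smul_mem _ hx)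

end OrthogonalReflection

section Generators

variable {F V : Type*} [Field F] [AddCommGroup V] [Module F V]
  {Q : QuadraticForm F V} {G X : Submodule F V}

theorem mem_subPerp {x : V} : x ∈ subPerp Q G ↔ ∀ g ∈ G, QuadraticMap.polar Q g x = 0 := by
  simp [subPerp, vecPerp]

theorem notMem_subPerp {x : V} : x ∉ subPerp Q G ↔ ∃ g ∈ G, QuadraticMap.polar Q g x ≠ 0 := by
  simp [mem_subPerp]

theorem IsTotallySingular.le_subPerp (hG : IsTotallySingular Q G) : G ≤ subPerp Q G :=
  fun x hx => mem_subPerp.mpr fun g hg => by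
    simp [QuadraticMap.polar, hG g hg, hG x hx, hG _ (G.add_mem hg hx)]

theorem IsTotallySingular.map {V' : Type*} [AddCommGroup V'] [Module F V']
    {Q' : QuadraticForm F V'} (hG : IsTotallySingular Q G) (f : Q →qᵢ Q') :
    IsTotallySingular Q' (G.map f.toLinearMap) := by
  rintro _ ⟨g, hg, rfl⟩
  exact (f.map_app g).trans (hG g hg)

theorem IsGenerator.map (hG : IsGenerator Q G) (e : Q.IsometryEquiv Q) :
    IsGenerator Q (G.map (e : V →ₗ[F] V)) :=
  ⟨hG.1.map e.toIsometry, (e.toLinearEquiv.finrank_map_eq G).trans hG.2⟩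

theorem IsTotallySingular.exists_nonsingular_notMem_subPerp (hG : IsTotallySingular Q G)
    (hGX : G ≤ X) (hX : ¬ X ≤ subPerp Q G) : ∃ x ∈ X, Q x ≠ 0 ∧ x ∉ subPerp Q G := by
  obtain ⟨x, hxX, hx⟩ := SetLike.not_le_iff_exists.mp hX
  by_cases hQx : Q x = 0
  · obtain ⟨g, hg, hgx⟩ := notMem_subPerp.mp hx
    have hQgx : Q (g + x) = QuadraticMap.polar Q g x := by
      rw [QuadraticMap.map_add Q, hG g hg, hQx, zero_add, zero_add]
    exact ⟨g + x, X.add_mem (hGX hg) hxX, hQgx ▸ hgx,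
      (add_mem_cancel_left (hG.le_subPerp hg)).not.mpr hx⟩
  · exact ⟨x, hxX, hQx, hx⟩

theorem IsTotallySingular.map_orthogonalReflection_ne (hG : IsTotallySingular Q G) {x : V}
    [Invertible (Q x)] (hx : x ∉ subPerp Q G) :
    G.map (orthogonalReflection Q x : V →ₗ[F] V) ≠ G := by
  intro hmap
  obtain ⟨g, hg, hgx⟩ := notMem_subPerp.mp hx
  have hrefl : g - (⅟(Q x) * QuadraticMap.polar Q x g) • x ∈ G := by
    rw [← orthogonalReflection_apply, ← hmap]
    exact mem_map_of_mem hg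
  have hcoeff : ⅟(Q x) * QuadraticMap.polar Q x g ≠ 0 :=
    mul_ne_zero (Invertible.ne_zero _) (QuadraticMap.polar_comm Q g x ▸ hgx)
  have hxG : x ∈ G := (G.smul_mem_iff hcoeff).mp ((G.sub_mem_iff_right hg).mp hrefl)
  exact hx (hG.le_subPerp hxG)

theorem further_generator_in_span_general (hG : IsGenerator Q G) (hGX : G ≤ X)
    (hXperp : ¬ X ≤ subPerp Q G) :
    ∃ G' : Submodule F V, IsGenerator Q G' ∧ G' ≠ G ∧ G' ≤ X := by
  obtain ⟨x, hxX, hQx, hx⟩ := hG.1.exists_nonsingular_notMem_subPerp hGX hXperp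
  let := invertibleOfNonzero hQx
  exact ⟨G.map (orthogonalReflection Q x : V →ₗ[F] V), hG.map _,
    hG.1.map_orthogonalReflection_ne hx, map_orthogonalReflection_le hGX hxX⟩

end Generators

theorem further_generator_in_span {F : Type*} [Field F] [Fintype F]
    (V : Type*) [AddCommGroup V] [Module F V] [FiniteDimensional F V]
    (Q : QuadraticForm F V) (hQnd : QuadNondeg Q)
    (G : Submodule F V) (hG : IsGenerator Q G)
    (X : Submodule F V) (hGX : G ≤ X)
    (hXdim : Module.finrank F ↥X = wittIndex Q + 1)
    (hXperp : ¬ X ≤ subPerp Q G) :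
    ∃ G' : Submodule F V, IsGenerator Q G' ∧ G' ≠ G ∧ G' ≤ X :=
  further_generator_in_span_general hG hGX hXperp
end

section
/- Let e ∈ {0,1,2} and r = e+1 (so (r,e) ∈ {(1,0),(2,1),(3,2)}). Then there is no hyperbolic, parabolic or elliptic avsp (according as e = 0, 1 or 2): there do not exist an F-vector space U of dimension r+2, a hyperplane H of U, a nondegenerate quadratic form Q on H of Witt defect e, a generator Π of Q, and such an avsp for (U, H, Q, Π). Indeed, the number of generators G of Q with G ∩ Π = {0} is strictly less than q^{e+1}. -/
open Module Submodule

/-!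
In the situation of the theorem the Witt index is `1`, so generators are spanned by single singular
vectors. Let `Π = ⟨p⟩`. A generator `G ≠ Π` is not orthogonal to `p`, as otherwise `G + Π` would be
totally singular; hence `G` contains exactly one `x` with `B(p, x) = 1`, and `Q(x) = 0`. Since
`Q(x + c p) = Q(x) + c B(p, x)`, each line in direction `p` on the affine hyperplane `B(p, ·) = 1`
contains exactly one singular vector. That hyperplane has `q^(e+1)` points, so exactly `q^e`
generators are disjoint from `Π`, whereas an avsp would provide `q^(e+1)` of them.
-/

section HyperbolicPair

variable {R M : Type*} [CommRing R] [AddCommGroup M] [Module R M] {Q : QuadraticForm R M} {p : M}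

/-- `(p, x)` is a hyperbolic pair of `Q`: both vectors are singular and `B(p, x) = 1`. With `p`
fixed, the second members `x` serve as normalised spanning vectors of the generators. -/
def IsHyperbolicPair (Q : QuadraticForm R M) (p x : M) : Prop :=
  Q p = 0 ∧ Q x = 0 ∧ QuadraticMap.polar Q p x = 1

theorem polar_smul_self_right (hp : Q p = 0) (c : R) : QuadraticMap.polar Q p (c • p) = 0 := by
  rw [QuadraticMap.polar_smul_right, QuadraticMap.polar_self, hp, smul_zero, smul_zero]

theorem polar_add_smul_self_right (hp : Q p = 0) (x : M) (c : R) :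
    QuadraticMap.polar Q p (x + c • p) = QuadraticMap.polar Q p x := by
  rw [QuadraticMap.polar_add_right, polar_smul_self_right hp, add_zero]

theorem map_add_smul_of_polar_eq_one (hp : Q p = 0) {x : M} (hx : QuadraticMap.polar Q p x = 1)
    (c : R) : Q (x + c • p) = Q x + c := by
  rw [QuadraticMap.map_add Q, QuadraticMap.map_smul, hp, QuadraticMap.polar_smul_right,
    QuadraticMap.polar_comm, hx, smul_zero, add_zero, smul_eq_mul, mul_one]

theorem bijOn_add_smul_isHyperbolicPair (hp : Q p = 0) :
    Set.BijOn (fun y : M × R => y.1 + y.2 • p) ({x | IsHyperbolicPair Q p x} ×ˢ Set.univ)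
      {y | QuadraticMap.polar Q p y = 1} := by
  refine Set.InvOn.bijOn (f' := fun y => (y + (-Q y) • p, Q y)) ⟨?_, ?_⟩ ?_ ?_
  · rintro ⟨x, c⟩ ⟨⟨-, hx, hpx⟩, -⟩
    simp only [map_add_smul_of_polar_eq_one hp hpx, hx, zero_add, neg_smul, add_neg_cancel_right]
  · intro y _
    simp only [neg_smul, neg_add_cancel_right]
  · rintro ⟨x, c⟩ ⟨⟨-, -, hpx⟩, -⟩
    exact (polar_add_smul_self_right hp x c).trans hpx
  · intro y (hy : QuadraticMap.polar Q p y = 1)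
    refine ⟨⟨hp, ?_, (polar_add_smul_self_right hp y _).trans hy⟩, Set.mem_univ _⟩
    rw [map_add_smul_of_polar_eq_one hp hy, add_neg_cancel]

end HyperbolicPair

section Counting

variable {F : Type*} [Field F] [Fintype F] {V : Type*} [AddCommGroup V] [Module F V]
  [FiniteDimensional F V]

theorem ncard_preimage_singleton_of_ne_zero {f : Dual F V} (hf : f ≠ 0) (b : F) :
    (f ⁻¹' {b}).ncard = Fintype.card F ^ (finrank F V - 1) := by
  have hker : finrank F (LinearMap.ker f) = finrank F V - 1 :=
    Nat.eq_sub_of_add_eq (Dual.finrank_ker_add_one_of_ne_zero hf)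
  calc (f ⁻¹' {b}).ncard = Nat.card (LinearMap.ker f) :=
        Nat.card_congr (AddMonoidHom.fiberEquivKerOfSurjective (f := f.toAddMonoidHom)
          (LinearMap.surjective hf) b)
    _ = Fintype.card F ^ (finrank F V - 1) := by
        rw [natCard_eq_pow_finrank (K := F), hker, Nat.card_eq_fintype_card]

theorem ncard_isHyperbolicPair {Q : QuadraticForm F V} {p : V} (hp : Q p = 0)
    (hpolar : Q.polarBilin p ≠ 0) {n : ℕ} (hn : finrank F V = n + 2) :
    {x | IsHyperbolicPair Q p x}.ncard = Fintype.card F ^ n := by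
  refine Nat.eq_of_mul_eq_mul_right (Fintype.card_pos (α := F)) ?_
  calc {x | IsHyperbolicPair Q p x}.ncard * Fintype.card F
      = ({x | IsHyperbolicPair Q p x} ×ˢ (Set.univ : Set F)).ncard := by
        rw [Set.ncard_prod, Set.ncard_univ, Nat.card_eq_fintype_card]
    _ = (Q.polarBilin p ⁻¹' {1}).ncard := (bijOn_add_smul_isHyperbolicPair hp).ncard_eq
    _ = Fintype.card F ^ n * Fintype.card F := by
        rw [ncard_preimage_singleton_of_ne_zero hpolar, hn, ← pow_succ, Nat.add_succ_sub_one]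

end Counting

section Generators

variable {F : Type*} [Field F] {V : Type*} [AddCommGroup V] [Module F V] {Q : QuadraticForm F V}

theorem isTotallySingular_span_singleton {v : V} : IsTotallySingular Q (F ∙ v) ↔ Q v = 0 := by
  refine ⟨fun h => h v (mem_span_singleton_self v), fun h x hx => ?_⟩
  obtain ⟨c, rfl⟩ := mem_span_singleton.mp hx
  rw [QuadraticMap.map_smul, h, smul_zero]

theorem IsTotallySingular.sup {W₁ W₂ : Submodule F V} (h₁ : IsTotallySingular Q W₁)
    (h₂ : IsTotallySingular Q W₂) (h : ∀ x ∈ W₁, ∀ y ∈ W₂, QuadraticMap.polar Q x y = 0) :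
    IsTotallySingular Q (W₁ ⊔ W₂) := by
  intro z hz
  obtain ⟨x, hx, y, hy, rfl⟩ := mem_sup.mp hz
  rw [QuadraticMap.map_add Q, h₁ x hx, h₂ y hy, h x hx y hy, add_zero, add_zero]

variable [FiniteDimensional F V]

theorem IsTotallySingular.finrank_le_wittIndex {W : Submodule F V} (hW : IsTotallySingular Q W) :
    finrank F W ≤ wittIndex Q :=
  le_csSup ⟨finrank F V, by rintro _ ⟨W, -, rfl⟩; exact W.finrank_le⟩ ⟨W, hW, rfl⟩

theorem IsGenerator.mem_of_forall_polar_eq_zero {G : Submodule F V} (hG : IsGenerator Q G) {v : V}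
    (hv : Q v = 0) (hGv : ∀ x ∈ G, QuadraticMap.polar Q x v = 0) : v ∈ G := by
  by_contra hvG
  have hsup : IsTotallySingular Q (G ⊔ F ∙ v) := by
    refine hG.1.sup (isTotallySingular_span_singleton.mpr hv) fun x hx y hy => ?_
    obtain ⟨c, rfl⟩ := mem_span_singleton.mp hy
    rw [QuadraticMap.polar_smul_right, hGv x hx, smul_zero]
  have hle := hsup.finrank_le_wittIndex
  rw [finrank_sup_span_singleton hvG, hG.2] at hle
  exact Nat.not_succ_le_self _ hle

theorem isGenerator_iff_exists_span_singleton (hw : wittIndex Q = 1) {G : Submodule F V} :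
    IsGenerator Q G ↔ ∃ v, v ≠ 0 ∧ Q v = 0 ∧ G = F ∙ v := by
  constructor
  · rintro ⟨hG, hdim⟩
    obtain ⟨v, rfl⟩ := (finrank_le_one_iff_isPrincipal G).mp (hdim.trans hw).le
    refine ⟨v, ?_, isTotallySingular_span_singleton.mp hG, rfl⟩
    rintro rfl
    rw [span_zero_singleton, finrank_bot, hw] at hdim
    exact zero_ne_one hdim
  · rintro ⟨v, hv0, hv, rfl⟩
    exact ⟨isTotallySingular_span_singleton.mpr hv, (finrank_span_singleton hv0).trans hw.symm⟩

theorem bijOn_span_singleton_isHyperbolicPair (hw : wittIndex Q = 1) {p : V} (hp0 : p ≠ 0)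
    (hp : Q p = 0) :
    Set.BijOn (fun x => F ∙ x) {x | IsHyperbolicPair Q p x}
      {G : Submodule F V | IsGenerator Q G ∧ G ⊓ (F ∙ p) = ⊥} := by
  refine ⟨?_, ?_, ?_⟩
  · rintro x ⟨-, hx, hpx⟩
    have hx_notMem : x ∉ F ∙ p := by
      intro hxp
      obtain ⟨c, rfl⟩ := mem_span_singleton.mp hxp
      exact zero_ne_one ((polar_smul_self_right hp c).symm.trans hpx)
    have hx0 : x ≠ 0 := fun h => hx_notMem (h ▸ zero_mem _)
    exact ⟨(isGenerator_iff_exists_span_singleton hw).mpr ⟨x, hx0, hx, rfl⟩,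
      (disjoint_span_singleton_of_notMem hx_notMem).symm.eq_bot⟩
  · rintro x ⟨-, -, hpx⟩ y ⟨-, -, hpy⟩ hxy
    have hyx : y ∈ F ∙ x := hxy.ge (mem_span_singleton_self y)
    obtain ⟨c, rfl⟩ := mem_span_singleton.mp hyx
    rw [QuadraticMap.polar_smul_right, hpx, smul_eq_mul, mul_one] at hpy
    rw [hpy, one_smul]
  · rintro G ⟨hG, hGp⟩
    obtain ⟨g, -, hg, rfl⟩ := (isGenerator_iff_exists_span_singleton hw).mp hG
    have hpg : QuadraticMap.polar Q p g ≠ 0 := by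
      intro h
      refine (disjoint_span_singleton' hp0).mp (disjoint_iff.mpr hGp)
        (hG.mem_of_forall_polar_eq_zero hp fun x hx => ?_)
      obtain ⟨c, rfl⟩ := mem_span_singleton.mp hx
      rw [QuadraticMap.polar_smul_left, QuadraticMap.polar_comm, h, smul_zero]
    refine ⟨(QuadraticMap.polar Q p g)⁻¹ • g, ⟨hp, ?_, ?_⟩, ?_⟩
    · rw [QuadraticMap.map_smul, hg, smul_zero]
    · rw [QuadraticMap.polar_smul_right, smul_eq_mul, inv_mul_cancel₀ hpg]
    · exact span_singleton_smul_eq (IsUnit.mk0 _ (inv_ne_zero hpg)) g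

theorem ncard_isGenerator_inf_eq_bot [Fintype F] (hQ : QuadNondeg Q) (hw : wittIndex Q = 1)
    {W : Submodule F V} (hW : IsGenerator Q W) {n : ℕ} (hn : finrank F V = n + 2) :
    {G : Submodule F V | IsGenerator Q G ∧ G ⊓ W = ⊥}.ncard = Fintype.card F ^ n := by
  obtain ⟨p, hp0, hp, rfl⟩ := (isGenerator_iff_exists_span_singleton hw).mp hW
  have hpolar : Q.polarBilin p ≠ 0 := fun h => hp0 (hQ p hp (LinearMap.congr_fun h))
  rw [← (bijOn_span_singleton_isHyperbolicPair hw hp0 hp).ncard_eq,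
    ncard_isHyperbolicPair hp hpolar hn]

end Generators

theorem IsAvsp.card_pow_le_ncard_isGenerator {F : Type*} [Field F] [Fintype F] {e r : ℕ}
    {U : Type*} [AddCommGroup U] [Module F U] {H : Submodule F U} [FiniteDimensional F H]
    {Q : QuadraticForm F H} {Pgen : Submodule F H} {P : Set (Submodule F U)}
    (hP : IsAvsp e r H Q Pgen P) :
    Fintype.card F ^ ((r + e + 1) / 2) ≤
      {G : Submodule F H | IsGenerator Q G ∧ G ⊓ Pgen = ⊥}.ncard := by
  obtain ⟨hcard, -, -, hgen, hinj, -, -⟩ := hP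
  have : Finite H := Module.finite_of_finite F
  rw [← hcard]
  exact Set.ncard_le_ncard_of_injOn (fun S => S.comap H.subtype) hgen
    fun S hS T hT => not_imp_not.mp (hinj S hS T hT)

theorem no_avsp_of_r_eq_e_add_one {F : Type*} [Field F] [Fintype F] (e r : ℕ)
    (he : e = 0 ∨ e = 1 ∨ e = 2) (hr : r = e + 1)
    (U : Type*) [AddCommGroup U] [Module F U] [FiniteDimensional F U]
    (hU : Module.finrank F U = r + 2)
    (H : Submodule F U) (hH : Module.finrank F ↥H = r + 1)
    (Q : QuadraticForm F ↥H) (hQnd : QuadNondeg Q)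
    (hdef : Module.finrank F ↥H = 2 * wittIndex Q + e)
    (Pgen : Submodule F ↥H) (hPgen : IsGenerator Q Pgen) :
    {G : Submodule F ↥H | IsGenerator Q G ∧ G ⊓ Pgen = ⊥}.ncard <
      Fintype.card F ^ (e + 1) ∧
    ¬ ∃ P : Set (Submodule F U), IsAvsp e r H Q Pgen P := by
  have hlt : {G : Submodule F ↥H | IsGenerator Q G ∧ G ⊓ Pgen = ⊥}.ncard <
      Fintype.card F ^ (e + 1) := by
    rw [ncard_isGenerator_inf_eq_bot hQnd (by omega) hPgen (hH.trans (by omega) : _ = e + 2)]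
    exact Nat.pow_lt_pow_succ Fintype.one_lt_card
  refine ⟨hlt, ?_⟩
  rintro ⟨P, hP⟩
  have hle := hP.card_pow_le_ncard_isGenerator
  rw [show (r + e + 1) / 2 = e + 1 by omega] at hle
  exact hlt.not_ge hle
end
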